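/- arXiv:2201.05328 — 2 statements merged into one kernel-verified Lean document; each statement's English description precedes it below -/
import Mathlib

section
/- Let k ∈ (0, 1) and k' = √(1 − k²). There exists a meromorphic function y on a domain of ℂ containing ℝ and the point ikK(k') such that: y agrees on ℝ with the second component x̃₂ of the solution of ẋ₁ = x₂, ẋ₂ = −sin x₁ with x̃(0) = (0, 2/k); y satisfies the algebraic differential equation (y')² = 1 − (1 − 2/k² + y²/2)² wherever it is finite; y has a simple pole at t = ikK(k') with residue −2i; and for all ω > 0, all real β, δ, θ, and all sufficiently small ρ > 0, the contour integral over the positively oriented circle |t − ikK(k')| = ρ satisfies ∮ y(t)(β cos(ωt + θ) − δ y(t)) dt = 4πβ(cosh(ωkK(k')) cos θ − i sinh(ωkK(k')) sin θ); in particular this contour integral is nonzero for every θ whenever β > 0. -/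
open Real Filter Topology

/-- The complete elliptic integral of the first kind. -/
noncomputable def Kell (k : ℝ) : ℝ :=
  ∫ φ in (0 : ℝ)..(π / 2), 1 / Real.sqrt (1 - k ^ 2 * Real.sin φ ^ 2)

/-!
The solution is `y(t) = (2 / k) dn (t / k)`. The addition theorem and Jacobi's imaginary
transformation continue `dn` to a single-valued function on `ℂ`, holomorphic by the Cauchy–Riemann
equations; at a zero of the common denominator, `1 / dn` continues analytically with a simple zero,
so `y` has a simple pole there.

The differential equation expresses `(y')²` as an even quartic in `y`, hence `((1 / y)')²` as an
even quartic in `1 / y`. Differentiating the latter shows that `(1 / y)''` vanishes at the pole, so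
that `y²` has no residue: the `δ`-term drops out of the contour integral, and the rest is the
residue of `y` times the value of the cosine at the pole.
-/

section CircleIntegral

variable {p : ℂ}

theorem eventually_forall_mem_closedBall_diff_center {P : ℂ → Prop} (hP : ∀ᶠ z in 𝓝[≠] p, P z) :
    ∀ᶠ ρ in 𝓝[>] (0 : ℝ), ∀ z ∈ Metric.closedBall p ρ \ {p}, P z := by
  have hmem : {z | z ≠ p → P z} ∈ 𝓝 p := eventually_nhdsWithin_iff.1 hP
  filter_upwards [nhdsWithin_le_nhds (eventually_closedBall_subset hmem)] with ρ hρ z hz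
  exact hρ hz.1 hz.2

theorem eventually_forall_mem_sphere {P : ℂ → Prop} (hP : ∀ᶠ z in 𝓝[≠] p, P z) :
    ∀ᶠ ρ in 𝓝[>] (0 : ℝ), ∀ z ∈ Metric.sphere p ρ, P z := by
  filter_upwards [eventually_forall_mem_closedBall_diff_center hP, self_mem_nhdsWithin]
    with ρ hρ hρ0 z hz
  exact hρ z ⟨Metric.sphere_subset_closedBall hz, Metric.ne_of_mem_sphere hz hρ0.ne'⟩

variable {E : Type*} [NormedAddCommGroup E]

theorem eventually_circleIntegrable {f : ℂ → E} (hf : ∀ᶠ z in 𝓝[≠] p, ContinuousAt f z) :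
    ∀ᶠ ρ in 𝓝[>] (0 : ℝ), CircleIntegrable f p ρ := by
  filter_upwards [eventually_forall_mem_sphere hf, self_mem_nhdsWithin] with ρ hρ hρ0
  exact ContinuousOn.circleIntegrable hρ0.le fun z hz => (hρ z hz).continuousWithinAt

theorem eventually_circleIntegral_eq_residue [NormedSpace ℂ E] [CompleteSpace E] {f : ℂ → E}
    {r : E} (hf : ∀ᶠ z in 𝓝[≠] p, DifferentiableAt ℂ f z)
    (hr : Tendsto (fun z => (z - p) • f z) (𝓝[≠] p) (𝓝 r)) :
    ∀ᶠ ρ in 𝓝[>] (0 : ℝ), (∮ z in C(p, ρ), f z) = (2 * π * Complex.I : ℂ) • r := by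
  filter_upwards [eventually_forall_mem_closedBall_diff_center hf, self_mem_nhdsWithin]
    with ρ hρ hρ0
  have hdiff : ∀ z ∈ Metric.closedBall p ρ \ {p},
      DifferentiableAt ℂ (fun z => (z - p) • f z) z := fun z hz =>
    (differentiableAt_id.sub_const p).smul (hρ z hz)
  rw [← Complex.circleIntegral_sub_center_inv_smul_of_differentiable_on_off_countable_of_tendsto
    hρ0 Set.countable_empty (fun z hz => (hdiff z hz).continuousAt.continuousWithinAt)
    (fun z hz => hdiff z ⟨Metric.ball_subset_closedBall hz.1.1, hz.1.2⟩) hr]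
  refine circleIntegral.integral_congr hρ0.le fun z hz => ?_
  rw [inv_smul_smul₀ (sub_ne_zero.2 (Metric.ne_of_mem_sphere hz hρ0.ne'))]

end CircleIntegral

/-- `y` has a simple pole at `p` with residue `r`. This is encoded by a simple zero of `y⁻¹`, with
derivative `r⁻¹`; as `0⁻¹ = 0`, it forces the junk value `y p = 0`. -/
structure HasSimplePole (y : ℂ → ℂ) (p r : ℂ) : Prop where
  apply_eq_zero : y p = 0
  residue_ne_zero : r ≠ 0
  analyticAt_inv : AnalyticAt ℂ y⁻¹ p
  hasDerivAt_inv : HasDerivAt y⁻¹ r⁻¹ p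

namespace HasSimplePole

variable {y : ℂ → ℂ} {p r : ℂ}

theorem meromorphicAt (h : HasSimplePole y p r) : MeromorphicAt y p := by
  simpa using h.analyticAt_inv.meromorphicAt.inv

theorem deriv_inv_ne_zero (h : HasSimplePole y p r) : deriv y⁻¹ p ≠ 0 := by
  rw [h.hasDerivAt_inv.deriv]
  exact inv_ne_zero h.residue_ne_zero

theorem eventually_ne_zero (h : HasSimplePole y p r) : ∀ᶠ z in 𝓝[≠] p, y z ≠ 0 := by
  filter_upwards [h.hasDerivAt_inv.eventually_ne (c := 0) (inv_ne_zero h.residue_ne_zero)]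
    with z hz
  simpa using hz

theorem tendsto_sub_mul (h : HasSimplePole y p r) :
    Tendsto (fun z => (z - p) * y z) (𝓝[≠] p) (𝓝 r) := by
  have hslope := h.hasDerivAt_inv.tendsto_slope.inv₀ (inv_ne_zero h.residue_ne_zero)
  rw [inv_inv] at hslope
  refine hslope.congr fun z => ?_
  simp [slope_def_field, h.apply_eq_zero, div_eq_mul_inv, mul_comm]

theorem not_continuousAt (h : HasSimplePole y p r) : ¬ContinuousAt y p := by
  intro hy
  have hinv : Tendsto y⁻¹ (𝓝[≠] p) (𝓝[≠] 0) := by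
    simpa [h.apply_eq_zero] using
      h.hasDerivAt_inv.tendsto_nhdsNE (inv_ne_zero h.residue_ne_zero)
  have htop : Tendsto y (𝓝[≠] p) (Bornology.cobounded ℂ) := by
    simpa [Function.comp_def] using tendsto_inv₀_nhdsNE_zero.comp hinv
  exact (hy.tendsto.mono_left nhdsWithin_le_nhds).not_tendsto
    (Metric.disjoint_nhds_cobounded _) htop

theorem comp_div_const (h : HasSimplePole y p r) {a b : ℂ} (ha : a ≠ 0) (hb : b ≠ 0) :
    HasSimplePole (fun z => a * y (z / b)) (b * p) (a * b * r) := by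
  have hp : b * p / b = p := mul_div_cancel_left₀ p hb
  have hinv : (fun z => a * y (z / b))⁻¹ = fun z => a⁻¹ * y⁻¹ (z / b) := by
    ext z
    simp [mul_comm]
  refine ⟨by simp [hp, h.apply_eq_zero], by simp [ha, hb, h.residue_ne_zero], ?_, ?_⟩
  · rw [hinv]
    exact analyticAt_const.mul (h.analyticAt_inv.comp_of_eq (by fun_prop) hp)
  · rw [hinv]
    have hdiv : HasDerivAt (fun z : ℂ => z / b) (1 / b) (b * p) := (hasDerivAt_id _).div_const b
    refine ((h.hasDerivAt_inv.comp_of_eq _ hdiv hp.symm).const_mul a⁻¹).congr_deriv ?_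
    field_simp

theorem eventually_hasDerivAt (h : HasSimplePole y p r) :
    ∀ᶠ z in 𝓝[≠] p, HasDerivAt y (-(deriv y⁻¹ z * y z ^ 2)) z := by
  filter_upwards [h.eventually_ne_zero, h.analyticAt_inv.eventually_analyticAt.filter_mono
    nhdsWithin_le_nhds] with z hz hz'
  have := hz'.differentiableAt.hasDerivAt.inv (inv_ne_zero hz)
  rw [inv_inv] at this
  refine this.congr_deriv ?_
  simp [div_eq_mul_inv]

theorem eventually_circleIntegrable_mul (h : HasSimplePole y p r) {f : ℂ → ℂ}
    (hf : AnalyticAt ℂ f p) : ∀ᶠ ρ in 𝓝[>] (0 : ℝ), CircleIntegrable (fun z => y z * f z) p ρ := by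
  refine eventually_circleIntegrable ?_
  filter_upwards [h.eventually_hasDerivAt,
    hf.eventually_analyticAt.filter_mono nhdsWithin_le_nhds] with z hy hfz
  exact hy.continuousAt.mul hfz.continuousAt

theorem eventually_circleIntegrable_sq (h : HasSimplePole y p r) :
    ∀ᶠ ρ in 𝓝[>] (0 : ℝ), CircleIntegrable (fun z => y z ^ 2) p ρ :=
  eventually_circleIntegrable (h.eventually_hasDerivAt.mono fun _ hz => hz.continuousAt.pow 2)

theorem eventually_circleIntegral_mul (h : HasSimplePole y p r) {f : ℂ → ℂ}
    (hf : AnalyticAt ℂ f p) :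
    ∀ᶠ ρ in 𝓝[>] (0 : ℝ), (∮ z in C(p, ρ), y z * f z) = 2 * π * Complex.I * (r * f p) := by
  refine eventually_circleIntegral_eq_residue ?_ ?_
  · filter_upwards [h.eventually_hasDerivAt,
      hf.eventually_analyticAt.filter_mono nhdsWithin_le_nhds] with z hy hfz
    exact hy.differentiableAt.mul hfz.differentiableAt
  · simpa only [smul_eq_mul, mul_assoc] using
      h.tendsto_sub_mul.mul (hf.continuousAt.tendsto.mono_left nhdsWithin_le_nhds)

theorem eventually_circleIntegral_sq (h : HasSimplePole y p r) :
    ∀ᶠ ρ in 𝓝[>] (0 : ℝ), (∮ z in C(p, ρ), y z ^ 2) =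
      2 * π * Complex.I * (r * deriv (deriv y⁻¹)⁻¹ p) := by
  have hq' := h.analyticAt_inv.deriv
  have hF : AnalyticAt ℂ (deriv y⁻¹)⁻¹ p := hq'.inv h.deriv_inv_ne_zero
  -- With `q = y⁻¹`, the function `y / q'` is a primitive of `y (1 / q')' - y²`.
  have hprim : ∀ᶠ z in 𝓝[≠] p, HasDerivAt (fun z => y z * (deriv y⁻¹)⁻¹ z)
      (y z * deriv (deriv y⁻¹)⁻¹ z - y z ^ 2) z := by
    filter_upwards [h.eventually_hasDerivAt,
      hF.eventually_analyticAt.filter_mono nhdsWithin_le_nhds,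
      (hq'.continuousAt.eventually_ne h.deriv_inv_ne_zero).filter_mono nhdsWithin_le_nhds]
      with z hy hFz hq
    refine (hy.mul hFz.differentiableAt.hasDerivAt).congr_deriv ?_
    rw [Pi.inv_apply]
    field_simp
    ring
  filter_upwards [eventually_forall_mem_sphere hprim, self_mem_nhdsWithin,
    h.eventually_circleIntegral_mul hF.deriv, h.eventually_circleIntegrable_mul hF.deriv,
    h.eventually_circleIntegrable_sq] with ρ hρ hρ0 hval hint_mul hint_sq
  have hzero := circleIntegral.integral_eq_zero_of_hasDerivWithinAt (le_of_lt hρ0) fun z hz =>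
    (hρ z hz).hasDerivWithinAt
  rw [circleIntegral.integral_sub hint_mul hint_sq, hval] at hzero
  exact (sub_eq_zero.1 hzero).symm

section EvenQuartic

variable {α β γ : ℂ}

theorem eventually_deriv_inv_sq (h : HasSimplePole y p r)
    (hode : ∀ᶠ z in 𝓝[≠] p, deriv y z ^ 2 = α * y z ^ 4 + β * y z ^ 2 + γ) :
    ∀ᶠ z in 𝓝 p, deriv y⁻¹ z ^ 2 = α + β * y⁻¹ z ^ 2 + γ * y⁻¹ z ^ 4 := by
  have hq := h.analyticAt_inv
  refine (ContinuousAt.eventuallyEq_nhds_iff_eventuallyEq_nhdsNE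
    (hq.deriv.pow 2).continuousAt (by have := hq.continuousAt; fun_prop)).1 ?_
  filter_upwards [hode, h.eventually_hasDerivAt, h.eventually_ne_zero] with z hz hy hy0
  rw [hy.deriv] at hz
  simp only [Pi.inv_apply, Pi.pow_apply]
  field_simp
  linear_combination hz

theorem deriv_deriv_inv (h : HasSimplePole y p r)
    (hode : ∀ᶠ z in 𝓝[≠] p, deriv y z ^ 2 = α * y z ^ 4 + β * y z ^ 2 + γ) :
    deriv (deriv y⁻¹) p = 0 := by
  have hq := h.hasDerivAt_inv
  have hq' := h.analyticAt_inv.deriv.differentiableAt.hasDerivAt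
  have hleft := hq'.fun_pow 2
  have hright := (((hq.fun_pow 2).const_mul β).const_add α).add ((hq.fun_pow 4).const_mul γ)
  have heq := hleft.unique (hright.congr_of_eventuallyEq (h.eventually_deriv_inv_sq hode))
  simpa [h.apply_eq_zero, hq.deriv, h.residue_ne_zero] using heq

theorem eventually_circleIntegral_sq_eq_zero (h : HasSimplePole y p r)
    (hode : ∀ᶠ z in 𝓝[≠] p, deriv y z ^ 2 = α * y z ^ 4 + β * y z ^ 2 + γ) :
    ∀ᶠ ρ in 𝓝[>] (0 : ℝ), (∮ z in C(p, ρ), y z ^ 2) = 0 := by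
  have hF : deriv (deriv y⁻¹)⁻¹ p = 0 := by
    rw [deriv_inv'' h.analyticAt_inv.deriv.differentiableAt h.deriv_inv_ne_zero,
      h.deriv_deriv_inv hode, neg_zero, zero_div]
  simpa [hF] using h.eventually_circleIntegral_sq

theorem eventually_circleIntegral_mul_sub (h : HasSimplePole y p r)
    (hode : ∀ᶠ z in 𝓝[≠] p, deriv y z ^ 2 = α * y z ^ 4 + β * y z ^ 2 + γ)
    {f : ℂ → ℂ} (hf : AnalyticAt ℂ f p) (δ : ℂ) :
    ∀ᶠ ρ in 𝓝[>] (0 : ℝ),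
      (∮ z in C(p, ρ), y z * (f z - δ * y z)) = 2 * π * Complex.I * (r * f p) := by
  filter_upwards [h.eventually_circleIntegral_mul hf, h.eventually_circleIntegral_sq_eq_zero hode,
    h.eventually_circleIntegrable_mul hf, h.eventually_circleIntegrable_sq]
    with ρ hmul hsq hint_mul hint_sq
  calc (∮ z in C(p, ρ), y z * (f z - δ * y z))
      = ∮ z in C(p, ρ), (y z * f z - δ • y z ^ 2) := by
        congr with z
        rw [smul_eq_mul]
        ring
    _ = 2 * π * Complex.I * (r * f p) := by
      rw [circleIntegral.integral_sub hint_mul hint_sq.const_fun_smul,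
        circleIntegral.integral_smul, hmul, hsq, smul_zero, sub_zero]

end EvenQuartic

end HasSimplePole

section CauchyRiemann

@[fun_prop]
theorem differentiable_re : Differentiable ℝ Complex.re := Complex.reCLM.differentiable

@[fun_prop]
theorem differentiable_im : Differentiable ℝ Complex.im := Complex.imCLM.differentiable

@[fun_prop]
theorem differentiable_ofReal : Differentiable ℝ Complex.ofReal := Complex.ofRealCLM.differentiable

theorem hasDerivAt_mk_left (a b : ℝ) : HasDerivAt (fun a : ℝ => (⟨a, b⟩ : ℂ)) 1 a := by
  simp only [Complex.mk_eq_add_mul_I]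
  exact (hasDerivAt_id a).ofReal_comp.add_const _

theorem hasDerivAt_mk_right (a b : ℝ) :
    HasDerivAt (fun b : ℝ => (⟨a, b⟩ : ℂ)) Complex.I b := by
  simp only [Complex.mk_eq_add_mul_I]
  simpa using ((hasDerivAt_id b).ofReal_comp.mul_const Complex.I).const_add (a : ℂ)

theorem hasDerivAt_of_cauchyRiemann {f : ℂ → ℂ} {z w : ℂ} (hf : DifferentiableAt ℝ f z)
    (hre : HasDerivAt (fun a : ℝ => f ⟨a, z.im⟩) w z.re)
    (him : HasDerivAt (fun b : ℝ => f ⟨z.re, b⟩) (Complex.I * w) z.im) :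
    HasDerivAt f w z := by
  have hone : fderiv ℝ f z 1 = w :=
    (hf.hasFDerivAt.comp_hasDerivAt z.re (hasDerivAt_mk_left z.re z.im)).unique hre
  have hI : fderiv ℝ f z Complex.I = Complex.I * w :=
    (hf.hasFDerivAt.comp_hasDerivAt z.im (hasDerivAt_mk_right z.re z.im)).unique him
  have hlin : fderiv ℝ f z Complex.I = Complex.I • fderiv ℝ f z 1 := by
    rw [hone, hI, smul_eq_mul]
  simpa [hone] using (hf.hasFDerivAt.complexOfReal_hasFDerivAt hlin).hasDerivAt

end CauchyRiemann

/-- Jacobi's elliptic functions of a real variable with parameter `m` (the square of the modulus),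
characterised as the solution of their differential system. -/
structure JacobiFunctions (m : ℝ) where
  sn : ℝ → ℝ
  cn : ℝ → ℝ
  dn : ℝ → ℝ
  hasDerivAt_sn : ∀ u, HasDerivAt sn (cn u * dn u) u
  hasDerivAt_cn : ∀ u, HasDerivAt cn (-(sn u * dn u)) u
  hasDerivAt_dn : ∀ u, HasDerivAt dn (-(m * sn u * cn u)) u
  sn_zero : sn 0 = 0
  cn_zero : cn 0 = 1
  dn_zero : dn 0 = 1

namespace JacobiFunctions

section Real

variable {m : ℝ} (J : JacobiFunctions m)

theorem sn_sq_add_cn_sq (u : ℝ) : J.sn u ^ 2 + J.cn u ^ 2 = 1 := by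
  have hderiv : ∀ u, HasDerivAt (fun u => J.sn u ^ 2 + J.cn u ^ 2) 0 u := fun u =>
    (((J.hasDerivAt_sn u).fun_pow 2).add ((J.hasDerivAt_cn u).fun_pow 2)).congr_deriv (by ring)
  simpa [J.sn_zero, J.cn_zero] using is_const_of_deriv_eq_zero
    (fun u => (hderiv u).differentiableAt) (fun u => (hderiv u).deriv) u 0

theorem dn_sq_add_mul_sn_sq (u : ℝ) : J.dn u ^ 2 + m * J.sn u ^ 2 = 1 := by
  have hderiv : ∀ u, HasDerivAt (fun u => J.dn u ^ 2 + m * J.sn u ^ 2) 0 u := fun u =>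
    (((J.hasDerivAt_dn u).fun_pow 2).add
      (((J.hasDerivAt_sn u).fun_pow 2).const_mul m)).congr_deriv (by ring)
  simpa [J.sn_zero, J.dn_zero] using is_const_of_deriv_eq_zero
    (fun u => (hderiv u).differentiableAt) (fun u => (hderiv u).deriv) u 0

@[fun_prop]
theorem differentiable_sn : Differentiable ℝ J.sn := fun u => (J.hasDerivAt_sn u).differentiableAt

@[fun_prop]
theorem differentiable_cn : Differentiable ℝ J.cn := fun u => (J.hasDerivAt_cn u).differentiableAt

@[fun_prop]
theorem differentiable_dn : Differentiable ℝ J.dn := fun u => (J.hasDerivAt_dn u).differentiableAt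

end Real

section Complex

variable {m : ℝ} (J : JacobiFunctions m) (J' : JacobiFunctions (1 - m))

/-- The common denominator of `sn`, `cn` and `dn` at a complex argument, obtained from the addition
theorem and Jacobi's imaginary transformation; `J'` belongs to the complementary parameter. -/
def complexDenom (z : ℂ) : ℝ := J'.cn z.im ^ 2 + m * J.sn z.re ^ 2 * J'.sn z.im ^ 2

/-- The numerator of `dn` at a complex argument. -/
noncomputable def complexDnNum (z : ℂ) : ℂ :=
  J.dn z.re * J'.cn z.im * J'.dn z.im - Complex.I * (m * J.sn z.re * J.cn z.re * J'.sn z.im)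

/-- Jacobi's `sn` at a complex argument, `0` at its poles. -/
noncomputable def complexSn (z : ℂ) : ℂ :=
  (J.sn z.re * J'.dn z.im + Complex.I * (J.cn z.re * J.dn z.re * J'.sn z.im * J'.cn z.im)) /
    J.complexDenom J' z

/-- Jacobi's `cn` at a complex argument, `0` at its poles. -/
noncomputable def complexCn (z : ℂ) : ℂ :=
  (J.cn z.re * J'.cn z.im - Complex.I * (J.sn z.re * J.dn z.re * J'.sn z.im * J'.dn z.im)) /
    J.complexDenom J' z

/-- Jacobi's `dn` at a complex argument, `0` at its poles. -/
noncomputable def complexDn (z : ℂ) : ℂ := J.complexDnNum J' z / J.complexDenom J' z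

theorem complexDn_ofReal (u : ℝ) : J.complexDn J' u = J.dn u := by
  simp [complexDn, complexDnNum, complexDenom, J'.sn_zero, J'.cn_zero, J'.dn_zero]

theorem ofReal_relations (u : ℝ) : (J.sn u : ℂ) ^ 2 + (J.cn u : ℂ) ^ 2 = 1 ∧
    (J.dn u : ℂ) ^ 2 + m * (J.sn u : ℂ) ^ 2 = 1 :=
  ⟨by exact_mod_cast J.sn_sq_add_cn_sq u, by exact_mod_cast J.dn_sq_add_mul_sn_sq u⟩

variable {J J'} {z : ℂ}

theorem complexSn_sq_add_complexCn_sq (hz : J.complexDenom J' z ≠ 0) :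
    J.complexSn J' z ^ 2 + J.complexCn J' z ^ 2 = 1 := by
  obtain ⟨r₁, r₂⟩ := J.ofReal_relations z.re
  obtain ⟨r₃, r₄⟩ := J'.ofReal_relations z.im
  have hz' : (J.complexDenom J' z : ℂ) ≠ 0 := by exact_mod_cast hz
  rw [complexSn, complexCn]
  field_simp
  simp only [complexDenom] at *
  push_cast at *
  grind [Complex.I_sq]

theorem complexDn_sq_add_mul_complexSn_sq (hz : J.complexDenom J' z ≠ 0) :
    J.complexDn J' z ^ 2 + m * J.complexSn J' z ^ 2 = 1 := by
  obtain ⟨r₁, r₂⟩ := J.ofReal_relations z.re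
  obtain ⟨r₃, r₄⟩ := J'.ofReal_relations z.im
  have hz' : (J.complexDenom J' z : ℂ) ≠ 0 := by exact_mod_cast hz
  rw [complexSn, complexDn]
  field_simp
  simp only [complexDenom, complexDnNum] at *
  push_cast at *
  grind [Complex.I_sq]

theorem differentiable_complexDenom : Differentiable ℝ (J.complexDenom J') := by
  unfold complexDenom
  fun_prop

theorem differentiable_complexDnNum : Differentiable ℝ (J.complexDnNum J') := by
  unfold complexDnNum
  fun_prop

theorem differentiableAt_complexDn (hz : J.complexDenom J' z ≠ 0) :
    DifferentiableAt ℝ (J.complexDn J') z := by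
  have hnum := differentiable_complexDnNum (J := J) (J' := J')
  have hdenom := differentiable_complexDenom (J := J) (J' := J')
  have hz' : (J.complexDenom J' z : ℂ) ≠ 0 := by exact_mod_cast hz
  unfold complexDn
  simp only [div_eq_mul_inv]
  fun_prop (disch := assumption)

theorem hasDerivAt_complexDenom_left (a b : ℝ) :
    HasDerivAt (fun a => J.complexDenom J' ⟨a, b⟩)
      (2 * m * J.sn a * J.cn a * J.dn a * J'.sn b ^ 2) a :=
  (((((J.hasDerivAt_sn a).fun_pow 2).const_mul m).mul_const (J'.sn b ^ 2)).const_add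
    (J'.cn b ^ 2)).congr_deriv (by ring)

theorem hasDerivAt_complexDenom_right (a b : ℝ) :
    HasDerivAt (fun b => J.complexDenom J' ⟨a, b⟩)
      (-(2 * J'.sn b * J'.cn b * J'.dn b * (1 - m * J.sn a ^ 2))) b :=
  (((J'.hasDerivAt_cn b).fun_pow 2).add
    (((J'.hasDerivAt_sn b).fun_pow 2).const_mul (m * J.sn a ^ 2))).congr_deriv (by ring)

theorem hasDerivAt_complexDnNum_left (a b : ℝ) :
    HasDerivAt (fun a => J.complexDnNum J' ⟨a, b⟩)
      (-(m * J.sn a * J.cn a * J'.cn b * J'.dn b) -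
        Complex.I * (m * J.dn a * (J.cn a ^ 2 - J.sn a ^ 2) * J'.sn b)) a := by
  have hdn := (((J.hasDerivAt_dn a).ofReal_comp.mul_const (J'.cn b : ℂ)).mul_const (J'.dn b : ℂ))
  have hsncn := ((((J.hasDerivAt_sn a).ofReal_comp.const_mul (m : ℂ)).mul
    (J.hasDerivAt_cn a).ofReal_comp).mul_const (J'.sn b : ℂ)).const_mul Complex.I
  refine (hdn.sub hsncn).congr_deriv ?_
  push_cast
  ring

theorem hasDerivAt_complexDnNum_right (a b : ℝ) :
    HasDerivAt (fun b => J.complexDnNum J' ⟨a, b⟩)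
      (-(J.dn a * J'.sn b * (J'.dn b ^ 2 + (1 - m) * J'.cn b ^ 2)) -
        Complex.I * (m * J.sn a * J.cn a * J'.cn b * J'.dn b)) b := by
  have hcndn := (((J'.hasDerivAt_cn b).ofReal_comp.const_mul (J.dn a : ℂ)).mul
    (J'.hasDerivAt_dn b).ofReal_comp)
  have hsn := ((J'.hasDerivAt_sn b).ofReal_comp.const_mul
    (m * J.sn a * J.cn a : ℂ)).const_mul Complex.I
  refine (hcndn.sub hsn).congr_deriv ?_
  push_cast
  ring

theorem hasDerivAt_complexDn (hz : J.complexDenom J' z ≠ 0) :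
    HasDerivAt (J.complexDn J') (-(m * J.complexSn J' z * J.complexCn J' z)) z := by
  obtain ⟨r₁, r₂⟩ := J.ofReal_relations z.re
  obtain ⟨r₃, r₄⟩ := J'.ofReal_relations z.im
  have hz' : (J.complexDenom J' z : ℂ) ≠ 0 := by exact_mod_cast hz
  refine hasDerivAt_of_cauchyRiemann (differentiableAt_complexDn hz) ?_ ?_
  · refine ((hasDerivAt_complexDnNum_left z.re z.im).div
      (hasDerivAt_complexDenom_left z.re z.im).ofReal_comp hz').congr_deriv ?_
    rw [complexSn, complexCn]
    field_simp
    simp only [complexDenom, complexDnNum]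
    push_cast at *
    grind [Complex.I_sq]
  · refine ((hasDerivAt_complexDnNum_right z.re z.im).div
      (hasDerivAt_complexDenom_right z.re z.im).ofReal_comp hz').congr_deriv ?_
    rw [complexSn, complexCn]
    field_simp
    simp only [complexDenom, complexDnNum]
    push_cast at *
    have hI := Complex.I_sq
    grind only

theorem deriv_complexDn_sq (hz : J.complexDenom J' z ≠ 0) :
    deriv (J.complexDn J') z ^ 2 =
      (1 - J.complexDn J' z ^ 2) * (J.complexDn J' z ^ 2 - (1 - m)) := by
  rw [(hasDerivAt_complexDn hz).deriv]
  have hcn := complexSn_sq_add_complexCn_sq hz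
  have hdn := complexDn_sq_add_mul_complexSn_sq hz
  grind

/-- The denominator of Glaisher's `nd = 1 / dn` at a complex argument. -/
def complexNdDenom (J : JacobiFunctions m) (J' : JacobiFunctions (1 - m)) (z : ℂ) : ℝ :=
  J'.dn z.im ^ 2 - m * J.sn z.re ^ 2

theorem continuous_complexNdDenom : Continuous (J.complexNdDenom J') := by
  have hsn := J.differentiable_sn.continuous
  have hdn := J'.differentiable_dn.continuous
  unfold complexNdDenom
  fun_prop

theorem hasDerivAt_complexNdDenom_left (a b : ℝ) :
    HasDerivAt (fun a => J.complexNdDenom J' ⟨a, b⟩) (-(2 * m * J.sn a * J.cn a * J.dn a)) a :=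
  ((((J.hasDerivAt_sn a).fun_pow 2).const_mul m).const_sub (J'.dn b ^ 2)).congr_deriv (by ring)

theorem complexDnNum_mul_star (z : ℂ) :
    J.complexDnNum J' z * star (J.complexDnNum J' z) =
      J.complexNdDenom J' z * J.complexDenom J' z := by
  obtain ⟨r₁, r₂⟩ := J.ofReal_relations z.re
  obtain ⟨r₃, r₄⟩ := J'.ofReal_relations z.im
  have hI := Complex.I_sq
  simp only [complexDenom, complexDnNum, complexNdDenom, Complex.star_def, map_sub, map_mul,
    Complex.conj_ofReal, Complex.conj_I]
  push_cast at *
  grind only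

theorem inv_complexDn (hz : J.complexNdDenom J' z ≠ 0) :
    (J.complexDn J' z)⁻¹ = star (J.complexDnNum J' z) / J.complexNdDenom J' z := by
  have hnorm := complexDnNum_mul_star (J := J) (J' := J') z
  have hz' : (J.complexNdDenom J' z : ℂ) ≠ 0 := by exact_mod_cast hz
  by_cases hnum : J.complexDnNum J' z = 0
  · simp [complexDn, hnum]
  · rw [complexDn, inv_div]
    field_simp
    linear_combination -hnorm

section Poles

theorem complexDenom_eq_zero_iff (hm : 0 < m) :
    J.complexDenom J' z = 0 ↔ J.sn z.re = 0 ∧ J'.cn z.im = 0 := by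
  have hsq := J'.sn_sq_add_cn_sq z.im
  rw [complexDenom, add_eq_zero_iff_of_nonneg (by positivity) (by positivity)]
  grind

theorem complexNdDenom_eq_of_complexDenom_eq_zero (hm : 0 < m) (hz : J.complexDenom J' z = 0) :
    J.complexNdDenom J' z = m := by
  obtain ⟨hsn, hcn⟩ := (complexDenom_eq_zero_iff hm).1 hz
  have hsq := J'.sn_sq_add_cn_sq z.im
  have hdn := J'.dn_sq_add_mul_sn_sq z.im
  rw [complexNdDenom]
  grind

theorem eventually_eq_of_sn_eq_zero {a : ℝ} (ha : J.sn a = 0) :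
    ∀ᶠ u in 𝓝 a, J.sn u = 0 → u = a := by
  have hcn := J.sn_sq_add_cn_sq a
  have hdn := J.dn_sq_add_mul_sn_sq a
  have hderiv : J.cn a * J.dn a ≠ 0 := by grind
  filter_upwards [eventually_nhdsWithin_iff.1 ((J.hasDerivAt_sn a).eventually_ne (c := 0) hderiv)]
    with u hu
  exact not_imp_not.1 hu

theorem eventually_eq_of_cn_eq_zero (hm : m ≠ 1) {a : ℝ} (ha : J.cn a = 0) :
    ∀ᶠ u in 𝓝 a, J.cn u = 0 → u = a := by
  have hcn := J.sn_sq_add_cn_sq a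
  have hdn := J.dn_sq_add_mul_sn_sq a
  have hderiv : -(J.sn a * J.dn a) ≠ 0 := by grind
  filter_upwards [eventually_nhdsWithin_iff.1 ((J.hasDerivAt_cn a).eventually_ne (c := 0) hderiv)]
    with u hu
  exact not_imp_not.1 hu

theorem eventually_complexDenom_ne_zero (hm : 0 < m) (z : ℂ) :
    ∀ᶠ w in 𝓝[≠] z, J.complexDenom J' w ≠ 0 := by
  by_cases hz : J.complexDenom J' z = 0
  · obtain ⟨hsn, hcn⟩ := (complexDenom_eq_zero_iff hm).1 hz
    rw [eventually_nhdsWithin_iff]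
    filter_upwards [Complex.continuous_re.tendsto z (eventually_eq_of_sn_eq_zero hsn),
      Complex.continuous_im.tendsto z (eventually_eq_of_cn_eq_zero (by linarith) hcn)]
      with w hre him hwz hw
    obtain ⟨hsn', hcn'⟩ := (complexDenom_eq_zero_iff hm).1 hw
    exact hwz (Complex.ext (hre hsn') (him hcn'))
  · exact (differentiable_complexDenom.continuous.continuousAt.eventually_ne hz).filter_mono
      nhdsWithin_le_nhds

theorem analyticAt_complexDn (hz : J.complexDenom J' z ≠ 0) : AnalyticAt ℂ (J.complexDn J') z := by
  rw [Complex.analyticAt_iff_eventually_differentiableAt]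
  filter_upwards [differentiable_complexDenom.continuous.continuousAt.eventually_ne hz] with w hw
  exact (hasDerivAt_complexDn hw).differentiableAt

theorem eventually_inv_complexDn (hm : 0 < m) (hz : J.complexDenom J' z = 0) :
    (J.complexDn J')⁻¹ =ᶠ[𝓝 z] fun w => star (J.complexDnNum J' w) / J.complexNdDenom J' w := by
  have hnd : J.complexNdDenom J' z ≠ 0 := by
    rw [complexNdDenom_eq_of_complexDenom_eq_zero hm hz]
    exact hm.ne'
  filter_upwards [continuous_complexNdDenom.continuousAt.eventually_ne hnd] with w hw
  exact inv_complexDn hw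

theorem analyticAt_inv_complexDn (hm : 0 < m) (hz : J.complexDenom J' z = 0) :
    AnalyticAt ℂ (J.complexDn J')⁻¹ z := by
  have hnd : J.complexNdDenom J' z ≠ 0 := by
    rw [complexNdDenom_eq_of_complexDenom_eq_zero hm hz]
    exact hm.ne'
  refine Complex.analyticAt_of_differentiable_on_punctured_nhds_of_continuousAt ?_ ?_
  · filter_upwards [eventually_complexDenom_ne_zero hm z,
      (continuous_complexNdDenom.continuousAt.eventually_ne hnd).filter_mono nhdsWithin_le_nhds]
      with w hw hnd_w
    have hnum : J.complexDnNum J' w ≠ 0 := by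
      refine left_ne_zero_of_mul (b := star (J.complexDnNum J' w)) ?_
      rw [complexDnNum_mul_star]
      exact_mod_cast mul_ne_zero hnd_w hw
    exact (hasDerivAt_complexDn hw).differentiableAt.inv
      (div_ne_zero hnum (by exact_mod_cast hw))
  · refine ContinuousAt.congr ?_ (eventually_inv_complexDn hm hz).symm
    have hnum := differentiable_complexDnNum (J := J) (J' := J').continuous
    have hcont := continuous_complexNdDenom (J := J) (J' := J')
    have hnd' : (J.complexNdDenom J' z : ℂ) ≠ 0 := by exact_mod_cast hnd
    fun_prop (disch := assumption)

theorem hasDerivAt_inv_complexDn (hm : 0 < m) (hz : J.complexDenom J' z = 0) :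
    HasDerivAt (J.complexDn J')⁻¹ (Complex.I * (J.dn z.re * J'.sn z.im)) z := by
  have hholo := (analyticAt_inv_complexDn hm hz).differentiableAt.hasDerivAt
  have hline := hasDerivAt_mk_left z.re z.im
  have hnd := complexNdDenom_eq_of_complexDenom_eq_zero hm hz
  have hm' : (m : ℂ) ≠ 0 := by exact_mod_cast hm.ne'
  have hnd' : (J.complexNdDenom J' z : ℂ) ≠ 0 := by rwa [hnd]
  have hline_deriv := hholo.hasFDerivAt.restrictScalars ℝ |>.comp_hasDerivAt z.re hline
  have hquot := ((hasDerivAt_complexDnNum_left z.re z.im).star.div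
    (hasDerivAt_complexNdDenom_left z.re z.im).ofReal_comp hnd').congr_of_eventuallyEq
    (hline.continuousAt.tendsto.eventually (eventually_inv_complexDn hm hz))
  obtain ⟨hsn, hcn⟩ := (complexDenom_eq_zero_iff hm).1 hz
  have hcn_sq : (J.cn z.re : ℂ) ^ 2 = 1 := by simpa [hsn] using (J.ofReal_relations z.re).1
  refine hholo.congr_deriv ?_
  simpa [complexDnNum, hnd, hsn, hcn, hcn_sq, field] using hline_deriv.unique hquot

theorem hasSimplePole_complexDn (hm : 0 < m) (hz : J.complexDenom J' z = 0) :
    HasSimplePole (J.complexDn J') z (-(Complex.I * (J.dn z.re * J'.sn z.im))) := by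
  obtain ⟨hsn, hcn⟩ := (complexDenom_eq_zero_iff hm).1 hz
  have hdn := (J.ofReal_relations z.re).2
  have hsn' := (J'.ofReal_relations z.im).1
  have hI := Complex.I_sq
  rw [hsn, Complex.ofReal_zero] at hdn
  rw [hcn, Complex.ofReal_zero] at hsn'
  have hinv : Complex.I * (J.dn z.re * J'.sn z.im) =
      (-(Complex.I * (J.dn z.re * J'.sn z.im)))⁻¹ := by
    refine eq_inv_of_mul_eq_one_left ?_
    grind only
  exact ⟨by simp [complexDn, hz], by grind only, analyticAt_inv_complexDn hm hz,
    hinv ▸ hasDerivAt_inv_complexDn hm hz⟩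

theorem meromorphic_complexDn (hm : 0 < m) : Meromorphic (J.complexDn J') := by
  intro z
  by_cases hz : J.complexDenom J' z = 0
  · exact (hasSimplePole_complexDn hm hz).meromorphicAt
  · exact (analyticAt_complexDn hz).meromorphicAt

theorem deriv_complexDn_sq_of_analyticAt (hm : 0 < m) (hz : AnalyticAt ℂ (J.complexDn J') z) :
    deriv (J.complexDn J') z ^ 2 =
      (1 - J.complexDn J' z ^ 2) * (J.complexDn J' z ^ 2 - (1 - m)) :=
  deriv_complexDn_sq fun hpole =>
    (hasSimplePole_complexDn hm hpole).not_continuousAt hz.continuousAt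

end Poles

end Complex

end JacobiFunctions

section Amplitude

theorem exists_orderIso_of_le_hasDerivAt {F f : ℝ → ℝ} {c : ℝ} (hc : 0 < c)
    (hF : ∀ t, HasDerivAt F (f t) t) (hf : ∀ t, c ≤ f t) :
    ∃ e : ℝ ≃o ℝ, (∀ t, e t = F t) ∧ ∀ u, HasDerivAt e.symm (f (e.symm u))⁻¹ u := by
  have hpos : ∀ t, 0 < f t := fun t => hc.trans_le (hf t)
  have hmono : StrictMono F := strictMono_of_hasDerivAt_pos hF hpos
  have hcont : Continuous F := continuous_iff_continuousAt.2 fun t => (hF t).continuousAt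
  have hsub : Monotone fun t => F t - t * c := monotone_of_hasDerivAt_nonneg
    (fun t => (hF t).sub ((hasDerivAt_id t).mul_const c)) fun t => by simpa using hf t
  have htop : Tendsto F atTop atTop := by
    refine tendsto_atTop_mono' _ ?_ (tendsto_atTop_add_const_right _ (F 0)
      (tendsto_id.atTop_mul_const hc))
    filter_upwards [eventually_ge_atTop 0] with t ht
    simpa [le_sub_iff_add_le'] using hsub ht
  have hbot : Tendsto F atBot atBot := by
    refine tendsto_atBot_mono' _ ?_ (tendsto_atBot_add_const_right _ (F 0)
      (tendsto_id.atBot_mul_const hc))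
    filter_upwards [eventually_le_atBot 0] with t ht
    simpa [add_comm] using hsub ht
  let e := hmono.orderIsoOfSurjective F (hcont.surjective htop hbot)
  exact ⟨e, fun _ => rfl, fun u => (hF (e.symm u)).of_local_left_inverse
    e.symm.continuous.continuousAt (hpos _).ne' (.of_forall e.apply_symm_apply)⟩

/-- The incomplete elliptic integral of the first kind. -/
noncomputable def ellipticF (κ t : ℝ) : ℝ :=
  ∫ φ in (0 : ℝ)..t, 1 / √(1 - κ ^ 2 * Real.sin φ ^ 2)

variable {κ : ℝ}

theorem one_sub_sq_mul_sin_sq_pos (hκ : κ ^ 2 < 1) (t : ℝ) : 0 < 1 - κ ^ 2 * Real.sin t ^ 2 := by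
  nlinarith [Real.sin_sq_le_one t, sq_nonneg κ]

theorem hasDerivAt_ellipticF (hκ : κ ^ 2 < 1) (t : ℝ) :
    HasDerivAt (ellipticF κ) (1 / √(1 - κ ^ 2 * Real.sin t ^ 2)) t := by
  have hcont : Continuous fun t => 1 / √(1 - κ ^ 2 * Real.sin t ^ 2) :=
    continuous_const.div (by fun_prop) fun t =>
      (Real.sqrt_pos.2 (one_sub_sq_mul_sin_sq_pos hκ t)).ne'
  exact hcont.integral_hasStrictDerivAt 0 t |>.hasDerivAt

theorem exists_amplitude (hκ : κ ^ 2 < 1) :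
    ∃ am : ℝ ≃o ℝ, am 0 = 0 ∧ am (Kell κ) = π / 2 ∧
      ∀ u, HasDerivAt am √(1 - κ ^ 2 * Real.sin (am u) ^ 2) u := by
  have hone : ∀ t, 1 ≤ 1 / √(1 - κ ^ 2 * Real.sin t ^ 2) := fun t => by
    rw [one_le_div (Real.sqrt_pos.2 (one_sub_sq_mul_sin_sq_pos hκ t)), Real.sqrt_le_one]
    exact sub_le_self _ (by positivity)
  obtain ⟨e, he, hderiv⟩ := exists_orderIso_of_le_hasDerivAt one_pos (hasDerivAt_ellipticF hκ) hone
  refine ⟨e.symm, ?_, ?_, by simpa using hderiv⟩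
  · rw [e.symm_apply_eq, he, ellipticF, intervalIntegral.integral_same]
  · rw [e.symm_apply_eq, he]
    rfl

theorem Kell_pos (hκ : κ ^ 2 < 1) : 0 < Kell κ := by
  obtain ⟨am, ham_zero, ham_Kell, -⟩ := exists_amplitude hκ
  rw [← am.lt_iff_lt, ham_zero, ham_Kell]
  positivity

theorem exists_jacobiFunctions (hκ : κ ^ 2 < 1) :
    ∃ J : JacobiFunctions (κ ^ 2), J.sn (Kell κ) = 1 ∧ J.cn (Kell κ) = 0 := by
  obtain ⟨am, ham_zero, ham_Kell, ham⟩ := exists_amplitude hκ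
  refine ⟨⟨fun u => Real.sin (am u), fun u => Real.cos (am u),
    fun u => √(1 - κ ^ 2 * Real.sin (am u) ^ 2), fun u => (ham u).sin,
    fun u => (ham u).cos.congr_deriv (by ring), fun u => ?_, ?_, ?_, ?_⟩, ?_, ?_⟩
  · have hpos := one_sub_sq_mul_sin_sq_pos hκ (am u)
    refine (((((ham u).sin.fun_pow 2).const_mul (κ ^ 2)).const_sub 1).sqrt
      hpos.ne').congr_deriv ?_
    have := (Real.sqrt_pos.2 hpos).ne'
    push_cast
    field_simp
  all_goals simp [ham_zero, ham_Kell]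

end Amplitude

section Trigonometric

theorem cos_I_mul_add (a θ : ℂ) : Complex.cos (Complex.I * a + θ) =
    Complex.cosh a * Complex.cos θ - Complex.I * Complex.sinh a * Complex.sin θ := by
  rw [mul_comm Complex.I a, Complex.cos_add, Complex.cos_mul_I, Complex.sin_mul_I]
  ring

theorem cos_ne_zero_of_im_ne_zero {z : ℂ} (hz : z.im ≠ 0) : Complex.cos z ≠ 0 := by
  rw [Complex.cos_ne_zero_iff]
  rintro n rfl
  simp at hz

theorem cosh_mul_cos_sub_ne_zero {a : ℝ} (ha : a ≠ 0) (θ : ℝ) :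
    Complex.cosh a * Complex.cos θ - Complex.I * Complex.sinh a * Complex.sin θ ≠ 0 := by
  rw [← cos_I_mul_add]
  exact cos_ne_zero_of_im_ne_zero (by simpa using ha)

end Trigonometric

section Pendulum

variable {k : ℝ}

/-- The Jacobi functions of modulus `k` read off from the rotational solution `x` of the pendulum
through `sin (x₁ / 2) = sn (t / k)`. -/
noncomputable def JacobiFunctions.ofPendulum {x : ℝ → ℝ × ℝ} (hk : k ≠ 0) (hx0 : x 0 = (0, 2 / k))
    (hx1 : ∀ t, HasDerivAt (fun s => (x s).1) ((x t).2) t)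
    (hx2 : ∀ t, HasDerivAt (fun s => (x s).2) (-Real.sin (x t).1) t) :
    JacobiFunctions (k ^ 2) where
  sn u := Real.sin ((x (k * u)).1 / 2)
  cn u := Real.cos ((x (k * u)).1 / 2)
  dn u := k / 2 * (x (k * u)).2
  hasDerivAt_sn u :=
    (((hx1 (k * u)).comp u (hasDerivAt_const_mul k)).div_const 2).sin.congr_deriv
      (by simp only [Function.comp_apply]; ring)
  hasDerivAt_cn u :=
    (((hx1 (k * u)).comp u (hasDerivAt_const_mul k)).div_const 2).cos.congr_deriv
      (by simp only [Function.comp_apply]; ring)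
  hasDerivAt_dn u := by
    have hsin : Real.sin (x (k * u)).1 =
        2 * Real.sin ((x (k * u)).1 / 2) * Real.cos ((x (k * u)).1 / 2) := by
      rw [← Real.sin_two_mul, mul_div_cancel₀ _ two_ne_zero]
    refine (((hx2 (k * u)).comp u (hasDerivAt_const_mul k)).const_mul (k / 2)).congr_deriv ?_
    rw [hsin]
    ring
  sn_zero := by simp [hx0]
  cn_zero := by simp [hx0]
  dn_zero := by simp [hx0, hk]

variable (J : JacobiFunctions (k ^ 2)) (J' : JacobiFunctions (1 - k ^ 2))

/-- The velocity `(2 / k) dn (z / k)` of the rotational solution of the pendulum in complex time. -/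
noncomputable def complexVelocity (z : ℂ) : ℂ :=
  2 / k * J.complexDn J' (z / k)

theorem complexVelocity_ofReal (t : ℝ) :
    complexVelocity J J' t = 2 / k * J.dn (t / k) := by
  rw [complexVelocity, ← Complex.ofReal_div, J.complexDn_ofReal]

variable {J J'}

theorem hasSimplePole_complexVelocity (hk : k ≠ 0) {z : ℂ} (hz : J.complexDenom J' z = 0) :
    HasSimplePole (complexVelocity J J') (k * z)
      (-(2 * Complex.I * (J.dn z.re * J'.sn z.im))) := by
  have hk' : (k : ℂ) ≠ 0 := by exact_mod_cast hk
  have hpole := (JacobiFunctions.hasSimplePole_complexDn (by positivity) hz).comp_div_const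
    (div_ne_zero two_ne_zero hk') hk'
  have hresidue : -(2 * Complex.I * (J.dn z.re * J'.sn z.im) : ℂ) =
      2 / k * k * -(Complex.I * (J.dn z.re * J'.sn z.im)) := by
    field_simp
  rw [hresidue]
  exact hpole

theorem meromorphic_complexVelocity (hk : k ≠ 0) : Meromorphic (complexVelocity J J') := by
  intro z
  have hdn := JacobiFunctions.meromorphic_complexDn (J := J) (J' := J') (by positivity) (z / k)
  exact (MeromorphicAt.const _ z).mul
    (hdn.comp_analyticAt (g := fun z : ℂ => z / k) (by fun_prop))

theorem analyticAt_complexDn_of_complexVelocity (hk : k ≠ 0) {z : ℂ}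
    (hz : AnalyticAt ℂ (complexVelocity J J') z) : AnalyticAt ℂ (J.complexDn J') (z / k) := by
  have hk' : (k : ℂ) ≠ 0 := by exact_mod_cast hk
  have heq : J.complexDn J' = fun w => k / 2 * complexVelocity J J' (k * w) := by
    ext w
    rw [complexVelocity, mul_div_cancel_left₀ w hk']
    field_simp
  rw [heq]
  exact analyticAt_const.mul (hz.comp_of_eq (by fun_prop) (mul_div_cancel₀ z hk'))

theorem deriv_complexVelocity_sq (hk : k ≠ 0) {z : ℂ}
    (hz : AnalyticAt ℂ (complexVelocity J J') z) :
    deriv (complexVelocity J J') z ^ 2 =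
      1 - (1 - 2 / k ^ 2 + complexVelocity J J' z ^ 2 / 2) ^ 2 := by
  have hk' : (k : ℂ) ≠ 0 := by exact_mod_cast hk
  have hdn := analyticAt_complexDn_of_complexVelocity hk hz
  have hderiv : deriv (complexVelocity J J') z =
      2 / k * (deriv (J.complexDn J') (z / k) * (1 / k)) :=
    ((hdn.differentiableAt.hasDerivAt.comp z ((hasDerivAt_id z).div_const (k : ℂ))).const_mul
      (2 / k : ℂ)).deriv
  have hode := JacobiFunctions.deriv_complexDn_sq_of_analyticAt (by positivity) hdn
  rw [hderiv, mul_pow, mul_pow, hode, complexVelocity]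
  push_cast
  field_simp
  ring

theorem eventually_circleIntegral_complexVelocity (hk : k ≠ 0) {p r : ℂ}
    (hp : HasSimplePole (complexVelocity J J') p r) {f : ℂ → ℂ} (hf : AnalyticAt ℂ f p) (δ : ℂ) :
    ∀ᶠ ρ in 𝓝[>] (0 : ℝ), (∮ z in C(p, ρ), complexVelocity J J' z *
      (f z - δ * complexVelocity J J' z)) = 2 * π * Complex.I * (r * f p) := by
  refine hp.eventually_circleIntegral_mul_sub (α := -(1 / 4)) (β := -(1 - 2 / k ^ 2))
    (γ := 1 - (1 - 2 / k ^ 2) ^ 2) ?_ hf δ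
  filter_upwards [hp.meromorphicAt.eventually_analyticAt] with z hz
  rw [deriv_complexVelocity_sq hk hz]
  ring

theorem complexVelocity_ofPendulum {x : ℝ → ℝ × ℝ} (hk : k ≠ 0) (hx0 : x 0 = (0, 2 / k))
    (hx1 : ∀ t, HasDerivAt (fun s => (x s).1) ((x t).2) t)
    (hx2 : ∀ t, HasDerivAt (fun s => (x s).2) (-Real.sin (x t).1) t)
    (J' : JacobiFunctions (1 - k ^ 2)) (t : ℝ) :
    complexVelocity (JacobiFunctions.ofPendulum hk hx0 hx1 hx2) J' t = (x t).2 := by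
  have hk' : (k : ℂ) ≠ 0 := by exact_mod_cast hk
  rw [complexVelocity_ofReal]
  simp only [JacobiFunctions.ofPendulum, mul_div_cancel₀ t hk]
  push_cast
  field_simp

theorem hasSimplePole_complexVelocity_I_mul (hk : k ≠ 0) {K' : ℝ} (hsn : J'.sn K' = 1)
    (hcn : J'.cn K' = 0) :
    HasSimplePole (complexVelocity J J') (Complex.I * (k * K' : ℝ)) (-2 * Complex.I) := by
  have hdenom : J.complexDenom J' (Complex.I * K') = 0 := by
    simp [JacobiFunctions.complexDenom, J.sn_zero, hcn]
  have hpole := hasSimplePole_complexVelocity hk hdenom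
  convert hpole using 1
  · push_cast
    ring
  · simp [J.dn_zero, hsn]

theorem eventually_circleIntegral_complexVelocity_cos (hk : k ≠ 0) {K' : ℝ} (hsn : J'.sn K' = 1)
    (hcn : J'.cn K' = 0) (ω β δ θ : ℝ) :
    ∀ᶠ ρ in 𝓝[>] (0 : ℝ), (∮ z in C(Complex.I * (k * K' : ℝ), ρ), complexVelocity J J' z *
      (β * Complex.cos (ω * z + θ) - δ * complexVelocity J J' z)) =
      4 * π * β * (Complex.cosh (ω * k * K' : ℝ) * Complex.cos θ -
        Complex.I * Complex.sinh (ω * k * K' : ℝ) * Complex.sin θ) := by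
  have hcos : AnalyticAt ℂ (fun z => β * Complex.cos (ω * z + θ)) (Complex.I * (k * K' : ℝ)) := by
    fun_prop
  have harg : ω * (Complex.I * (k * K' : ℝ)) + θ = Complex.I * (ω * k * K' : ℝ) + θ := by
    push_cast
    ring
  filter_upwards [eventually_circleIntegral_complexVelocity hk
    (hasSimplePole_complexVelocity_I_mul hk hsn hcn) hcos δ] with ρ hρ
  rw [hρ, harg, cos_I_mul_add]
  linear_combination (-4 * π * β * (Complex.cosh (ω * k * K' : ℝ) * Complex.cos θ -
    Complex.I * Complex.sinh (ω * k * K' : ℝ) * Complex.sin θ)) * Complex.I_sq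

end Pendulum

/-- Let `k ∈ (0,1)`, `k' = √(1−k²)`, and let `x̃` be the rotational solution of the
unperturbed pendulum with `x̃(0) = (0, 2/k)`. There is a meromorphic function `y` on a
domain of `ℂ` containing `ℝ` and `ikK(k')` agreeing with `x̃₂` on `ℝ`, satisfying
`(y')² = 1 − (1 − 2/k² + y²/2)²` wherever it is analytic, having a simple pole at `ikK(k')`
with residue `−2i`, and whose contour integral over small circles around `ikK(k')` satisfies
`∮ y(t)(β cos(ωt+θ) − δ y(t)) dt = 4πβ(cosh(ωkK(k')) cos θ − i sinh(ωkK(k')) sin θ)`;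
in particular this integral is nonzero for every `θ` whenever `β > 0`. -/
theorem stmt_18 (k : ℝ) (hk : k ∈ Set.Ioo (0 : ℝ) 1)
    (x : ℝ → ℝ × ℝ) (hx0 : x 0 = (0, 2 / k))
    (hx1 : ∀ t : ℝ, HasDerivAt (fun s => (x s).1) ((x t).2) t)
    (hx2 : ∀ t : ℝ, HasDerivAt (fun s => (x s).2) (-Real.sin ((x t).1)) t) :
    ∃ (U : Set ℂ) (y : ℂ → ℂ),
      IsOpen U ∧ IsConnected U ∧
      (∀ t : ℝ, (t : ℂ) ∈ U) ∧
      (Complex.I * ((k * Kell (Real.sqrt (1 - k ^ 2)) : ℝ) : ℂ)) ∈ U ∧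
      MeromorphicOn y U ∧
      (∀ t : ℝ, y (t : ℂ) = ((x t).2 : ℂ)) ∧
      (∀ z ∈ U, AnalyticAt ℂ y z →
        (deriv y z) ^ 2 = 1 - (1 - 2 / (k : ℂ) ^ 2 + (y z) ^ 2 / 2) ^ 2) ∧
      Tendsto (fun z : ℂ => (z - Complex.I * ((k * Kell (Real.sqrt (1 - k ^ 2)) : ℝ) : ℂ)) * y z)
        (𝓝[≠] (Complex.I * ((k * Kell (Real.sqrt (1 - k ^ 2)) : ℝ) : ℂ)))
        (𝓝 (-2 * Complex.I)) ∧
      (∀ ω : ℝ, 0 < ω → ∀ β δ θ : ℝ, ∃ ρ₀ > 0, ∀ ρ ∈ Set.Ioo (0 : ℝ) ρ₀,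
        (∮ z in C(Complex.I * ((k * Kell (Real.sqrt (1 - k ^ 2)) : ℝ) : ℂ), ρ),
            y z * ((β : ℂ) * Complex.cos ((ω : ℂ) * z + (θ : ℂ)) - (δ : ℂ) * y z))
          = 4 * (π : ℂ) * (β : ℂ) *
            (Complex.cosh ((ω * k * Kell (Real.sqrt (1 - k ^ 2)) : ℝ) : ℂ) * Complex.cos (θ : ℂ)
             - Complex.I * Complex.sinh ((ω * k * Kell (Real.sqrt (1 - k ^ 2)) : ℝ) : ℂ)
               * Complex.sin (θ : ℂ)) ∧
        (0 < β →
          (∮ z in C(Complex.I * ((k * Kell (Real.sqrt (1 - k ^ 2)) : ℝ) : ℂ), ρ),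
              y z * ((β : ℂ) * Complex.cos ((ω : ℂ) * z + (θ : ℂ)) - (δ : ℂ) * y z)) ≠ 0)) := by
  have hk0 : k ≠ 0 := hk.1.ne'
  have hcompl : √(1 - k ^ 2) ^ 2 = 1 - k ^ 2 :=
    Real.sq_sqrt (sub_nonneg.2 (pow_le_one₀ hk.1.le hk.2.le))
  have hmodulus : √(1 - k ^ 2) ^ 2 < 1 := by
    rw [hcompl]
    exact sub_lt_self 1 (pow_pos hk.1 2)
  have hexists := exists_jacobiFunctions hmodulus
  have hK := Kell_pos hmodulus
  rw [hcompl] at hexists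
  obtain ⟨J', hsn, hcn⟩ := hexists
  let J := JacobiFunctions.ofPendulum hk0 hx0 hx1 hx2
  refine ⟨Set.univ, complexVelocity J J', isOpen_univ, isConnected_univ, fun _ => trivial, trivial,
    fun z _ => meromorphic_complexVelocity hk0 z, fun t => ?_,
    fun z _ => deriv_complexVelocity_sq hk0,
    (hasSimplePole_complexVelocity_I_mul hk0 hsn hcn).tendsto_sub_mul, fun ω hω β δ θ => ?_⟩
  · exact complexVelocity_ofPendulum hk0 hx0 hx1 hx2 J' t
  · obtain ⟨ρ₀, hρ₀, hball⟩ := mem_nhdsGT_iff_exists_Ioo_subset.1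
      (eventually_circleIntegral_complexVelocity_cos (J := J) hk0 hsn hcn ω β δ θ)
    refine ⟨ρ₀, hρ₀, fun ρ hρ => ⟨hball hρ, fun hβ => ?_⟩⟩
    rw [hball hρ]
    have hcosh := cosh_mul_cos_sub_ne_zero (mul_pos (mul_pos hω hk.1) hK).ne' θ
    exact mul_ne_zero (by simp [pi_ne_zero, hβ.ne']) hcosh
end

section
/- Let k ∈ (0, 1) and let f be a holomorphic function on a neighborhood of 0 in ℂ such that f(0) = 1/k and f(s)² = (1 − s²)/(k² − s²) for all s in that neighborhood. Then for all sufficiently small ρ > 0, the contour integral over the positively oriented circle |s| = ρ satisfies ∮_{|s|=ρ} f(s)/s² ds = 0. -/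
/-!
The integral over a small circle is `2πi` times the residue of `f(s)/s²` at `0`, that is `f'(0)`.
Since `f²` is even near `0`, its derivative `2 f f'` vanishes there, and `f(0) ≠ 0` leaves
`f'(0) = 0`.
-/

open Filter Topology Real Complex

section Deriv

variable {𝕜 : Type*} [NontriviallyNormedField 𝕜]

lemma deriv_zero_eq_zero_of_even {F : Type*} [NormedAddCommGroup F] [NormedSpace 𝕜 F]
    [IsAddTorsionFree F] {f : 𝕜 → F} (hf : Function.Even f) : deriv f 0 = 0 := by
  have hneg : deriv f 0 = -deriv f 0 := by
    simpa only [hf _, neg_zero] using deriv_comp_neg f 0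
  exact self_eq_neg.mp hneg

lemma deriv_eq_zero_of_deriv_pow_eq_zero {f : 𝕜 → 𝕜} {x : 𝕜} {n : ℕ} (hn : (n : 𝕜) ≠ 0)
    (hf : DifferentiableAt 𝕜 f x) (hx : f x ≠ 0) (hpow : deriv (fun y ↦ f y ^ n) x = 0) :
    deriv f x = 0 := by
  rw [deriv_fun_pow hf] at hpow
  exact (mul_eq_zero.mp hpow).resolve_left (mul_ne_zero hn (pow_ne_zero _ hx))

end Deriv

lemma eventually_circleIntegral_one_div_sub_sq_smul {E : Type*} [NormedAddCommGroup E]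
    [NormedSpace ℂ E] [CompleteSpace E] {f : ℂ → E} {c : ℂ} (hf : AnalyticAt ℂ f c) :
    ∀ᶠ ρ in 𝓝[>] (0 : ℝ),
      (∮ z in C(c, ρ), (1 / (z - c) ^ 2) • f z) = (2 * π * I) • deriv f c := by
  filter_upwards [self_mem_nhdsWithin, nhdsWithin_le_nhds
    (eventually_closedBall_subset hf.eventually_analyticAt)] with ρ hρ hball
  have hdiff : DifferentiableOn ℂ f (Metric.closedBall c ρ) :=
    fun z hz ↦ (hball hz).differentiableAt.differentiableWithinAt
  exact hdiff.deriv_eq_smul_circleIntegral hρ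

lemma eventually_circleIntegral_div_sq_eq_zero_of_even_pow {f g : ℂ → ℂ} {n : ℕ} (hn : n ≠ 0)
    (hf : AnalyticAt ℂ f 0) (hf0 : f 0 ≠ 0) (hg : Function.Even g)
    (hfg : (fun s ↦ f s ^ n) =ᶠ[𝓝 0] g) :
    ∀ᶠ ρ in 𝓝[>] (0 : ℝ), (∮ s in C(0, ρ), f s / s ^ 2) = 0 := by
  have hpow : deriv (fun s ↦ f s ^ n) 0 = 0 :=
    hfg.deriv_eq.trans (deriv_zero_eq_zero_of_even hg)
  have hderiv : deriv f 0 = 0 :=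
    deriv_eq_zero_of_deriv_pow_eq_zero (mod_cast hn) hf.differentiableAt hf0 hpow
  filter_upwards [eventually_circleIntegral_one_div_sub_sq_smul hf] with ρ hρ
  simpa [hderiv, div_eq_inv_mul] using hρ

theorem stmt_19_general {k : ℂ} (hk : k ≠ 0) {f : ℂ → ℂ} (hf : AnalyticAt ℂ f 0)
    (hfsq : ∀ᶠ s in 𝓝 0, f s ^ 2 = (1 - s ^ 2) / (k ^ 2 - s ^ 2)) :
    ∀ᶠ ρ in 𝓝[>] (0 : ℝ), (∮ s in C(0, ρ), f s / s ^ 2) = 0 := by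
  have hf0 : f 0 ≠ 0 := by
    have hsq : f 0 ^ 2 ≠ 0 := by simp [hfsq.self_of_nhds, hk]
    exact ne_zero_pow two_ne_zero hsq
  have heven : Function.Even fun s : ℂ ↦ (1 - s ^ 2) / (k ^ 2 - s ^ 2) := fun s ↦ by
    simp only [neg_sq]
  exact eventually_circleIntegral_div_sq_eq_zero_of_even_pow two_ne_zero hf hf0 heven hfsq

/-- Let `k ∈ (0,1)` and let `f` be holomorphic near `0 ∈ ℂ` with `f(0) = 1/k` and
`f(s)² = (1 − s²)/(k² − s²)` near `0`. Then for all sufficiently small `ρ > 0`, the contour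
integral of `f(s)/s²` over the positively oriented circle `|s| = ρ` vanishes. -/
theorem stmt_19 (k : ℝ) (hk : k ∈ Set.Ioo (0 : ℝ) 1) (f : ℂ → ℂ) (V : Set ℂ)
    (hV : V ∈ nhds (0 : ℂ)) (hf : AnalyticOnNhd ℂ f V) (hf0 : f 0 = 1 / (k : ℂ))
    (hfsq : ∀ s ∈ V, (f s) ^ 2 = (1 - s ^ 2) / ((k : ℂ) ^ 2 - s ^ 2)) :
    ∃ ρ₀ > 0, ∀ ρ ∈ Set.Ioo (0 : ℝ) ρ₀,
      (∮ s in C(0, ρ), f s / s ^ 2) = 0 :=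
  mem_nhdsGT_iff_exists_Ioo_subset.mp <| stmt_19_general (mod_cast hk.1.ne')
    (hf 0 (mem_of_mem_nhds hV)) (eventually_of_mem hV hfsq)
end
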